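/- Let E, F ∈ GL_d(ℂ) with d > 2 satisfy FᵀEᵀEF = λI for some λ ∈ ℂ^×, and suppose the solutions q of q² − λ^{−1/2} tr(EᵀE⁻¹) q + 1 = 0 are generic (q = ±1 or not a root of unity), so that Mrozinski's quantum group G(E,F) is cosemisimple. Then GKdim G(E,F) = ∞. -/

import Mathlib

/-!
Background definitions: comodules over a Hopf algebra, simple comodules, direct
summands, supports, subcoalgebras, cosemisimplicity, Gelfand-Kirillov dimension,
and (measured) Grothendieck semirings of cosemisimple Hopf algebras.
-/

open TensorProduct

/-- The data of a coaction of a Hopf algebra `H` on a `k`-vector space `X`: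
a linear map `ρ : X → X ⊗ H`.  The comodule axioms are recorded separately in
`Comod.IsComodule`. -/
structure Comod (k : Type) [Field k] (H : Type) [Ring H] [HopfAlgebra k H] : Type 1 where
  X : Type
  [addCommGroup : AddCommGroup X]
  [module : Module k X]
  ρ : X →ₗ[k] X ⊗[k] H

attribute [instance] Comod.addCommGroup Comod.module

namespace Comod

variable {k : Type} [Field k] {H : Type} [Ring H] [HopfAlgebra k H]

/-- The trivial `H`-comodule `𝟏`, i.e. `k` with coaction `x ↦ x ⊗ 1`. -/
noncomputable def unit (k : Type) [Field k] (H : Type) [Ring H] [HopfAlgebra k H] :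
    Comod k H where
  X := k
  ρ := (TensorProduct.mk k k H).flip 1

/-- The regular comodule: `H` coacting on itself by comultiplication. -/
noncomputable def regular (k : Type) [Field k] (H : Type) [Ring H] [HopfAlgebra k H] :
    Comod k H where
  X := H
  ρ := Coalgebra.comul

/-- Tensor product of comodules: the coaction on `M ⊗ N` is
`(id ⊗ id ⊗ μ_H) ∘ (id ⊗ τ ⊗ id) ∘ (ρ_M ⊗ ρ_N)`. -/
noncomputable def tensor (M N : Comod k H) : Comod k H where
  X := M.X ⊗[k] N.X
  ρ := (LinearMap.mul' k H).lTensor (M.X ⊗[k] N.X)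
        ∘ₗ (TensorProduct.tensorTensorTensorComm k M.X H N.X H).toLinearMap
        ∘ₗ TensorProduct.map M.ρ N.ρ

/-- Binary direct sum of comodules. -/
noncomputable def dsum (M N : Comod k H) : Comod k H where
  X := M.X × N.X
  ρ := (LinearMap.inl k M.X N.X).rTensor H ∘ₗ M.ρ ∘ₗ LinearMap.fst k M.X N.X
     + (LinearMap.inr k M.X N.X).rTensor H ∘ₗ N.ρ ∘ₗ LinearMap.snd k M.X N.X

/-- Finite direct sum of a family of comodules. -/
noncomputable def pi {ι : Type} [Fintype ι] (S : ι → Comod k H) : Comod k H where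
  X := ∀ i, (S i).X
  ρ := letI := Classical.decEq ι
    ∑ i : ι, (LinearMap.single k (fun j => (S j).X) i).rTensor H ∘ₗ (S i).ρ
        ∘ₗ LinearMap.proj i

/-- `n`-th tensor power of a comodule (`M^{⊗0} = 𝟏`, `M^{⊗1} = M`). -/
noncomputable def tpow (M : Comod k H) : ℕ → Comod k H
  | 0 => unit k H
  | 1 => M
  | n + 2 => (M.tpow (n + 1)).tensor M

/-- A linear map is a map of comodules if it intertwines the coactions. -/
def IsHom (M N : Comod k H) (f : M.X →ₗ[k] N.X) : Prop :=
  N.ρ ∘ₗ f = f.rTensor H ∘ₗ M.ρ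

/-- Isomorphism of comodules. -/
def Iso (M N : Comod k H) : Prop :=
  ∃ e : M.X ≃ₗ[k] N.X, IsHom M N e.toLinearMap

/-- The comodule axioms (coassociativity and counitality) for a coaction. -/
def IsComodule (M : Comod k H) : Prop :=
  (M.ρ.rTensor H ∘ₗ M.ρ =
      (TensorProduct.assoc k M.X H H).symm.toLinearMap
        ∘ₗ (Coalgebra.comul (R := k) (A := H)).lTensor M.X ∘ₗ M.ρ) ∧
  (TensorProduct.rid k M.X).toLinearMap
      ∘ₗ (Coalgebra.counit (R := k) (A := H)).lTensor M.X ∘ₗ M.ρ = LinearMap.id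

/-- A subspace `N ⊆ M` is a subcomodule if the coaction restricts to `N ⊗ H`. -/
def IsSubcomodule (M : Comod k H) (N : Submodule k M.X) : Prop :=
  ∀ x ∈ N, M.ρ x ∈ LinearMap.range (N.subtype.rTensor H)

/-- Simple (hence finite-dimensional) comodules. -/
def IsSimple (M : Comod k H) : Prop :=
  M.IsComodule ∧ Nontrivial M.X ∧ FiniteDimensional k M.X ∧
    ∀ N : Submodule k M.X, M.IsSubcomodule N → N = ⊥ ∨ N = ⊤

/-- `S` is a direct summand of `M` (as comodules): the inclusion splits. -/
def DirectSummand (S M : Comod k H) : Prop :=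
  ∃ (i : S.X →ₗ[k] M.X) (p : M.X →ₗ[k] S.X),
    IsHom S M i ∧ IsHom M S p ∧ p ∘ₗ i = LinearMap.id

/-- `C` is the support of the comodule `M`: the (unique) minimal subspace
`C ⊆ H` with `ρ(M) ⊆ M ⊗ C`. -/
def IsSupport (M : Comod k H) (C : Submodule k H) : Prop :=
  (∀ x : M.X, M.ρ x ∈ LinearMap.range (C.subtype.lTensor M.X)) ∧
    ∀ C' : Submodule k H,
      (∀ x : M.X, M.ρ x ∈ LinearMap.range (C'.subtype.lTensor M.X)) → C ≤ C'

end Comod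

/-- A subspace `C ⊆ H` is a subcoalgebra if `Δ(C) ⊆ C ⊗ C`. -/
def IsSubcoalgebra (k : Type) [Field k] (H : Type) [Ring H] [HopfAlgebra k H]
    (C : Submodule k H) : Prop :=
  ∀ x ∈ C, Coalgebra.comul (R := k) x ∈
    LinearMap.range (TensorProduct.map C.subtype C.subtype)

/-- A simple subcoalgebra: a nonzero subcoalgebra with no proper nonzero
subcoalgebras. -/
def IsSimpleSubcoalgebra (k : Type) [Field k] (H : Type) [Ring H] [HopfAlgebra k H]
    (C : Submodule k H) : Prop :=
  IsSubcoalgebra k H C ∧ C ≠ ⊥ ∧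
    ∀ D : Submodule k H, D ≤ C → IsSubcoalgebra k H D → D = ⊥ ∨ D = C

/-- A Hopf algebra is cosemisimple if every subcomodule of every comodule is a
direct summand. -/
def IsCosemisimple (k : Type) [Field k] (H : Type) [Ring H] [HopfAlgebra k H] : Prop :=
  ∀ M : Comod k H, M.IsComodule →
    ∀ N : Submodule k M.X, M.IsSubcomodule N →
      ∃ N' : Submodule k M.X, M.IsSubcomodule N' ∧ IsCompl N N'

open scoped ENNReal in
/-- The Gelfand-Kirillov dimension of a `k`-algebra `A`:
`sup_V limsup_n log(dim V^n)/log n` over finite-dimensional subspaces `V ⊆ A`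
(for a finitely generated algebra this agrees with the value computed from any
finite-dimensional generating subspace containing `1`). -/
noncomputable def GKdim (k : Type) (A : Type) [Field k] [Ring A] [Algebra k A] : ℝ≥0∞ :=
  ⨆ (V : Submodule k A) (_ : FiniteDimensional k V),
    Filter.limsup
      (fun n : ℕ => ENNReal.ofReal
        (Real.log (Module.finrank k ↥(V ^ n)) / Real.log n)) Filter.atTop

/-- The (measured) Grothendieck semiring of a cosemisimple Hopf algebra `H`:
a commutative semiring `R` together with a class map `cls` on finite-dimensional
`H`-comodules which is constant on isomorphism classes, additive on direct sums,
multiplicative on tensor products, sends `𝟏` to `1`, and induces a bijection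
between iso-classes of finite-dimensional comodules and elements of `R`.
The dimension function `d_H` on `R_+(H)` is recovered as `cls M ↦ dim_k M`. -/
structure GrSemiring (k : Type) [Field k] (H : Type) [Ring H] [HopfAlgebra k H] :
    Type 1 where
  R : Type
  [commSemiring : CommSemiring R]
  cls : Comod k H → R
  cls_one : cls (Comod.unit k H) = 1
  cls_iso : ∀ M N : Comod k H, M.IsComodule → N.IsComodule →
    FiniteDimensional k M.X → FiniteDimensional k N.X → Comod.Iso M N → cls M = cls N
  cls_dsum : ∀ M N : Comod k H, M.IsComodule → N.IsComodule →
    FiniteDimensional k M.X → FiniteDimensional k N.X →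
      cls (M.dsum N) = cls M + cls N
  cls_tensor : ∀ M N : Comod k H, M.IsComodule → N.IsComodule →
    FiniteDimensional k M.X → FiniteDimensional k N.X →
      cls (M.tensor N) = cls M * cls N
  cls_surj : ∀ r : R, ∃ M : Comod k H, M.IsComodule ∧ FiniteDimensional k M.X ∧ cls M = r
  cls_inj : ∀ M N : Comod k H, M.IsComodule → N.IsComodule →
    FiniteDimensional k M.X → FiniteDimensional k N.X → cls M = cls N → Comod.Iso M N

attribute [instance] GrSemiring.commSemiring

namespace Comod

section Helpers

variable {k : Type} [Field k] {H : Type} [Ring H] [HopfAlgebra k H]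

/-- The coefficients of `M` lie in the subspace `C`. -/
def CoefIn (M : Comod k H) (C : Submodule k H) : Prop :=
  ∀ x : M.X, M.ρ x ∈ LinearMap.range (C.subtype.lTensor M.X)

theorem CoefIn.of_surj {M N : Comod k H} {C : Submodule k H} (h : M.CoefIn C)
    (f : M.X →ₗ[k] N.X) (hf : IsHom M N f) (hs : Function.Surjective f) : N.CoefIn C := by
  intro y
  obtain ⟨x, rfl⟩ := hs y
  obtain ⟨t, ht⟩ := h x
  have h1 : N.ρ (f x) = f.rTensor H (M.ρ x) := LinearMap.congr_fun hf x
  refine ⟨f.rTensor C t, ?_⟩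
  rw [h1, ← ht]
  exact LinearMap.congr_fun (show (C.subtype.lTensor N.X) ∘ₗ (f.rTensor C)
    = f.rTensor H ∘ₗ C.subtype.lTensor M.X by
      rw [LinearMap.lTensor_comp_rTensor, LinearMap.rTensor_comp_lTensor]) t

theorem fst_isHom (M N : Comod k H) : IsHom (M.dsum N) M (LinearMap.fst k M.X N.X) := by
  unfold IsHom dsum
  dsimp only
  have h1 : (LinearMap.fst k M.X N.X).rTensor H ∘ₗ (LinearMap.inl k M.X N.X).rTensor H =
      LinearMap.id := by
    rw [← LinearMap.rTensor_comp, LinearMap.fst_comp_inl, LinearMap.rTensor_id]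
  have h2 : (LinearMap.fst k M.X N.X).rTensor H ∘ₗ (LinearMap.inr k M.X N.X).rTensor H =
      0 := by
    rw [← LinearMap.rTensor_comp, LinearMap.fst_comp_inr, LinearMap.rTensor_zero]
  apply LinearMap.ext
  intro x
  have e1 := LinearMap.congr_fun h1 (M.ρ x.1)
  have e2 := LinearMap.congr_fun h2 (N.ρ x.2)
  simp only [LinearMap.comp_apply, LinearMap.id_apply, LinearMap.zero_apply] at e1 e2
  simp only [LinearMap.comp_apply, LinearMap.add_apply, map_add, LinearMap.fst_apply,
    LinearMap.snd_apply, e1, e2, add_zero]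

theorem CoefIn.tensor {M N : Comod k H} {C D : Submodule k H} (hM : M.CoefIn C)
    (hN : N.CoefIn D) : (M.tensor N).CoefIn (C * D) := by
  have key : ∀ (s : M.X ⊗[k] C) (t : N.X ⊗[k] D),
      (LinearMap.mul' k H).lTensor (M.X ⊗[k] N.X)
        (TensorProduct.tensorTensorTensorComm k M.X H N.X H
          (C.subtype.lTensor M.X s ⊗ₜ D.subtype.lTensor N.X t)) ∈
        LinearMap.range ((C * D).subtype.lTensor (M.X ⊗[k] N.X)) := by
    intro s t
    induction s with
    | zero => simp
    | add a b ha hb =>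
      rw [map_add, TensorProduct.add_tmul, map_add, map_add]
      exact Submodule.add_mem _ ha hb
    | tmul m c =>
      induction t with
      | zero => simp
      | add a b ha hb =>
        rw [map_add, TensorProduct.tmul_add, map_add, map_add]
        exact Submodule.add_mem _ ha hb
      | tmul n e =>
        refine ⟨(m ⊗ₜ n) ⊗ₜ ⟨c * e, Submodule.mul_mem_mul c.2 e.2⟩, ?_⟩
        simp
  intro x
  refine TensorProduct.induction_on (motive := fun x : M.X ⊗[k] N.X =>
    (M.tensor N).ρ x ∈ LinearMap.range ((C * D).subtype.lTensor (M.X ⊗[k] N.X))) x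
    ?_ ?_ ?_
  · exact (congrArg (· ∈ LinearMap.range ((C * D).subtype.lTensor (M.X ⊗[k] N.X)))
      (map_zero (M.tensor N).ρ)).mpr (Submodule.zero_mem _)
  · intro m n
    obtain ⟨s, hs⟩ := hM m
    obtain ⟨t, ht⟩ := hN n
    have := key s t
    rw [hs, ht] at this
    exact this
  · intro a b ha hb
    exact (congrArg (· ∈ LinearMap.range ((C * D).subtype.lTensor (M.X ⊗[k] N.X)))
      (map_add (M.tensor N).ρ a b)).mpr (Submodule.add_mem _ ha hb)

theorem exists_coefIn (M : Comod k H) [FiniteDimensional k M.X] :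
    ∃ C : Submodule k H, FiniteDimensional k C ∧ M.CoefIn C := by
  let b := Module.finBasis k M.X
  obtain ⟨C, hC, hle⟩ := TensorProduct.exists_finite_submodule_right_of_setFinite
    (R := k) (Set.range fun i => M.ρ (b i)) (Set.finite_range _)
  refine ⟨C, hC, fun x => ?_⟩
  have hx : x ∈ Submodule.span k (Set.range b) := by rw [b.span_eq]; trivial
  have : Submodule.span k (Set.range b) ≤
      (LinearMap.range (C.subtype.lTensor M.X)).comap M.ρ := by
    rw [Submodule.span_le]
    rintro _ ⟨i, rfl⟩
    exact hle ⟨i, rfl⟩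
  exact this hx

theorem IsSimple.finrank_le {M : Comod k H} (hM : M.IsSimple) {C : Submodule k H}
    [FiniteDimensional k C] (hC : M.CoefIn C) :
    Module.finrank k M.X ≤ Module.finrank k C := by
  obtain ⟨⟨hco, hcu⟩, hnt, hfd, hs⟩ := hM
  obtain ⟨x0, hx0⟩ := exists_ne (0 : M.X)
  obtain ⟨φ, hφ⟩ : ∃ φ : Module.Dual k M.X, φ x0 ≠ 0 := by
    by_contra! h
    exact hx0 ((Module.forall_dual_apply_eq_zero_iff k x0).1 h)
  let p : M.X ⊗[k] H →ₗ[k] H := (TensorProduct.lid k H).toLinearMap ∘ₗ φ.rTensor H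
  let g : M.X →ₗ[k] H := p ∘ₗ M.ρ
  have hgC : ∀ x, g x ∈ C := by
    intro x
    obtain ⟨t, ht⟩ := hC x
    change p (M.ρ x) ∈ C
    rw [← ht]
    clear ht
    induction t with
    | zero => simp
    | add a b ha hb => rw [map_add, map_add]; exact C.add_mem ha hb
    | tmul m c => simpa [p] using C.smul_mem _ c.2
  have hε : ∀ x, Coalgebra.counit (R := k) (g x) = φ x := by
    intro x
    have h1 : (Coalgebra.counit (R := k) (A := H)) ∘ₗ p = φ ∘ₗ
        (TensorProduct.rid k M.X).toLinearMap ∘ₗ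
          (Coalgebra.counit (R := k) (A := H)).lTensor M.X := by
      ext m h
      simp [p, mul_comm]
    have h2 := LinearMap.congr_fun h1 (M.ρ x)
    have h3 := LinearMap.congr_fun hcu x
    simp only [LinearMap.comp_apply, LinearMap.id_apply] at h2 h3
    rw [h3] at h2
    exact h2
  have hΔ : g.rTensor H ∘ₗ M.ρ = Coalgebra.comul ∘ₗ g := by
    have h1 : p.rTensor H ∘ₗ (TensorProduct.assoc k M.X H H).symm.toLinearMap =
        (TensorProduct.lid k (H ⊗[k] H)).toLinearMap ∘ₗ φ.rTensor (H ⊗[k] H) := by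
      ext m a b
      simp [p, TensorProduct.smul_tmul']
    have h2 : ((TensorProduct.lid k (H ⊗[k] H)).toLinearMap ∘ₗ φ.rTensor (H ⊗[k] H)) ∘ₗ
        (Coalgebra.comul (R := k) (A := H)).lTensor M.X = Coalgebra.comul ∘ₗ p := by
      ext m a
      simp [p]
    calc g.rTensor H ∘ₗ M.ρ = p.rTensor H ∘ₗ (M.ρ.rTensor H ∘ₗ M.ρ) := by
          rw [← LinearMap.comp_assoc, ← LinearMap.rTensor_comp]
      _ = (p.rTensor H ∘ₗ (TensorProduct.assoc k M.X H H).symm.toLinearMap) ∘ₗ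
            (Coalgebra.comul (R := k) (A := H)).lTensor M.X ∘ₗ M.ρ := by
          rw [hco, LinearMap.comp_assoc]
      _ = Coalgebra.comul ∘ₗ g := by
          rw [h1, ← LinearMap.comp_assoc, h2, LinearMap.comp_assoc]
  have hsub : M.IsSubcomodule (LinearMap.ker g) := by
    intro x hx
    have hex := Module.Flat.rTensor_exact H (LinearMap.exact_subtype_ker_map g)
    refine (hex _).1 ?_
    have := LinearMap.congr_fun hΔ x
    simp only [LinearMap.comp_apply] at this
    rw [this, LinearMap.mem_ker.1 hx, map_zero]
  have hker : LinearMap.ker g = ⊥ := by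
    rcases hs _ hsub with h | h
    · exact h
    · exfalso
      have : x0 ∈ LinearMap.ker g := by rw [h]; trivial
      apply hφ
      rw [← hε, LinearMap.mem_ker.1 this, map_zero]
  have hinj : Function.Injective (g.codRestrict C hgC) := by
    rw [← LinearMap.ker_eq_bot, LinearMap.ker_codRestrict, hker]
  exact LinearMap.finrank_le_finrank_of_injective hinj

theorem Iso.finrank_eq {M N : Comod k H} (h : Iso M N) :
    Module.finrank k M.X = Module.finrank k N.X := by
  obtain ⟨e, -⟩ := h
  exact e.finrank_eq

end Helpers

end Comod

theorem GKdim_top_of_two_pow (k A : Type) [Field k] [Ring A] [Algebra k A]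
    (V : Submodule k A) (hV : FiniteDimensional k V)
    (h : ∀ n : ℕ, 1 ≤ n → 2 ^ n ≤ Module.finrank k ↥(V ^ n)) : GKdim k A = ⊤ := by
  have hlim : Filter.Tendsto (fun n : ℕ => ENNReal.ofReal
        (Real.log (Module.finrank k ↥(V ^ n)) / Real.log n)) Filter.atTop (nhds ⊤) := by
    apply ENNReal.tendsto_ofReal_nhds_top.2
    have h0 : Filter.Tendsto (fun x : ℝ => x / Real.log x) Filter.atTop Filter.atTop := by
      have h1 : Filter.Tendsto (fun x : ℝ => Real.log x / x) Filter.atTop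
          (nhdsWithin 0 (Set.Ioi 0)) := by
        rw [tendsto_nhdsWithin_iff]
        refine ⟨Real.isLittleO_log_id_atTop.tendsto_div_nhds_zero, ?_⟩
        filter_upwards [Filter.eventually_gt_atTop (1 : ℝ)] with x hx
        exact div_pos (Real.log_pos hx) (by linarith)
      have := h1.inv_tendsto_nhdsGT_zero
      refine this.congr fun x => ?_
      simp
    have h2 : Filter.Tendsto (fun n : ℕ => Real.log 2 * ((n : ℝ) / Real.log n))
        Filter.atTop Filter.atTop :=
      (h0.comp tendsto_natCast_atTop_atTop).const_mul_atTop (Real.log_pos (by norm_num))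
    refine Filter.tendsto_atTop_mono' _ ?_ h2
    filter_upwards [Filter.eventually_ge_atTop 1] with n hn
    rw [← mul_div_assoc]
    refine div_le_div_of_nonneg_right ?_ (Real.log_natCast_nonneg n)
    have h3 : ((2 : ℝ) ^ n) ≤ (Module.finrank k ↥(V ^ n) : ℝ) := by exact_mod_cast h n hn
    have := Real.log_le_log (by positivity) h3
    rw [Real.log_pow] at this
    linarith
  rw [eq_top_iff, ← hlim.limsup_eq]
  exact le_iSup₂_of_le (f := fun (V : Submodule k A) (_ : FiniteDimensional k V) =>
    Filter.limsup (fun n : ℕ => ENNReal.ofReal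
        (Real.log (Module.finrank k ↥(V ^ n)) / Real.log n)) Filter.atTop) V hV le_rfl

/-- Example 3.10 of the paper, case `d > 2`.  Let
`E, F ∈ GL_d(ℂ)` with `d > 2` satisfy `FᵀEᵀEF = λ·I` for some `λ ∈ ℂ^×`, and
suppose the solutions `q` of `q² − λ^{-1/2} tr(EᵀE⁻¹) q + 1 = 0` are generic
(`q = ±1` or not a root of unity).  Let `B = G(E,F)` be Mrozinski's quantum
group: a finitely generated cosemisimple Hopf algebra whose comodule theory is
that of `O_q(GL(2))` — its simple comodules are `S_{n,m}` (`n ∈ ℕ`, `m ∈ ℤ`,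
every simple comodule isomorphic to exactly one of them) with `S_{0,0} = 𝟏`,
`S_{0,m} ⊗ S_{0,m'} ≅ S_{0,m+m'}`, `S_{1,0} ⊗ S_{0,m} ≅ S_{1,m}`,
`S_{1,0} ⊗ S_{n+1,m} ≅ S_{n+2,m} ⊕ S_{n,m+1}`, and the fundamental comodule
`S_{1,0}` is `d`-dimensional (so the semiring isomorphism
`R_+(G(E,F)) ≅ R_+(O_q(GL(2)))` sends its class to a `2`-dimensional class).
Then `GKdim G(E,F) = ∞`. -/
theorem stmt12 (d : ℕ) (hd : 2 < d)
    (E F : Matrix (Fin d) (Fin d) ℂ) (hE : IsUnit E) (hF : IsUnit F)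
    (l : ℂ) (hl : l ≠ 0)
    (hEF : F.transpose * E.transpose * E * F = l • (1 : Matrix (Fin d) (Fin d) ℂ))
    (q : ℂ)
    (hq : ∃ μ : ℂ, μ ^ 2 * l = 1 ∧
      q ^ 2 - μ * (E.transpose * E⁻¹).trace * q + 1 = 0)
    (hgen : q = 1 ∨ q = -1 ∨ ∀ n : ℕ, 0 < n → q ^ n ≠ 1)
    (B : Type) [Ring B] [HopfAlgebra ℂ B]
    (hfg : Algebra.FiniteType ℂ B) (hcss : IsCosemisimple ℂ B)
    (S : ℕ → ℤ → Comod ℂ B)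
    (hsimple : ∀ n m, (S n m).IsSimple)
    (hcomplete : ∀ M : Comod ℂ B, M.IsSimple → ∃ n m, Comod.Iso M (S n m))
    (hdistinct : ∀ n m n' m', Comod.Iso (S n m) (S n' m') → n = n' ∧ m = m')
    (hunit : Comod.Iso (S 0 0) (Comod.unit ℂ B))
    (hdet : ∀ m m', Comod.Iso ((S 0 m).tensor (S 0 m')) (S 0 (m + m')))
    (hfus0 : ∀ m, Comod.Iso ((S 1 0).tensor (S 0 m)) (S 1 m))
    (hfus : ∀ n m, Comod.Iso ((S 1 0).tensor (S (n + 1) m))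
        ((S (n + 2) m).dsum (S n (m + 1))))
    (hfund : Module.finrank ℂ (S 1 0).X = d) :
    GKdim ℂ B = ⊤ := by
  have hfd : ∀ n m, FiniteDimensional ℂ (S n m).X := fun n m => (hsimple n m).2.2.1
  obtain ⟨V, hV, hVc⟩ := Comod.exists_coefIn (S 1 0)
  have hcoef : ∀ n : ℕ, (S (n + 1) 0).CoefIn (V ^ (n + 1)) := by
    intro n
    induction n with
    | zero => simpa using hVc
    | succ n ih =>
      have h1 := hVc.tensor ih
      rw [← pow_succ'] at h1
      obtain ⟨e, he⟩ := hfus n 0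
      exact (h1.of_surj _ he e.surjective).of_surj _ (Comod.fst_isHom _ _)
        LinearMap.fst_surjective
  have hD : ∀ m, Module.finrank ℂ (S 0 m).X = 1 := by
    intro m
    have h1 : Module.finrank ℂ ((S 0 m).X ⊗[ℂ] (S 0 (-m)).X) = _ := (hdet m (-m)).finrank_eq
    have h2 : Module.finrank ℂ (S 0 0).X = Module.finrank ℂ ℂ := hunit.finrank_eq
    rw [Module.finrank_tensorProduct, add_neg_cancel, h2, Module.finrank_self] at h1
    exact Nat.eq_one_of_mul_eq_one_right h1
  have hD1 : ∀ m, Module.finrank ℂ (S 1 m).X = d := by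
    intro m
    have h1 : Module.finrank ℂ ((S 1 0).X ⊗[ℂ] (S 0 m).X) = _ := (hfus0 m).finrank_eq
    rw [Module.finrank_tensorProduct, hD, hfund, mul_one] at h1
    exact h1.symm
  have hrec : ∀ n m, d * Module.finrank ℂ (S (n + 1) m).X =
      Module.finrank ℂ (S (n + 2) m).X + Module.finrank ℂ (S n (m + 1)).X := by
    intro n m
    have h1 : Module.finrank ℂ ((S 1 0).X ⊗[ℂ] (S (n + 1) m).X) =
      Module.finrank ℂ ((S (n + 2) m).X × (S n (m + 1)).X) := (hfus n m).finrank_eq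
    rwa [Module.finrank_tensorProduct, hfund, Module.finrank_prod] at h1
  have hind : ∀ n, ∀ m m', 2 ^ n ≤ Module.finrank ℂ (S n m).X ∧
      Module.finrank ℂ (S n m).X = Module.finrank ℂ (S n m').X ∧
      Module.finrank ℂ (S (n + 1) m).X = Module.finrank ℂ (S (n + 1) m').X ∧
      2 * Module.finrank ℂ (S n m).X ≤ Module.finrank ℂ (S (n + 1) m).X := by
    intro n
    induction n with
    | zero =>
      intro m m'
      have e : ∀ m, Module.finrank ℂ (S (0 + 1) m).X = d := hD1
      rw [hD, hD, e, e]
      exact ⟨le_rfl, rfl, rfl, by omega⟩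
    | succ n ih =>
      intro m m'
      obtain ⟨a1, a2, a3, a4⟩ := ih m m'
      obtain ⟨b1, b2, b3, b4⟩ := ih m (m + 1)
      obtain ⟨c1, c2, c3, c4⟩ := ih m (m' + 1)
      have r1 := hrec n m
      have r2 := hrec n m'
      have r3 : 3 * Module.finrank ℂ (S (n + 1) m).X ≤
        d * Module.finrank ℂ (S (n + 1) m).X := Nat.mul_le_mul_right _ hd
      rw [← a3] at r2
      refine ⟨?_, a3, ?_, ?_⟩
      · rw [pow_succ]; omega
      · rw [show n + 1 + 1 = n + 2 from rfl]; omega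
      · rw [show n + 1 + 1 = n + 2 from rfl]; omega
  refine GKdim_top_of_two_pow ℂ B V hV fun n hn => ?_
  obtain ⟨n, rfl⟩ : ∃ j, n = j + 1 := ⟨n - 1, by omega⟩
  have : FiniteDimensional ℂ ↥(V ^ (n + 1)) :=
    Module.Finite.iff_fg.2 ((Module.Finite.iff_fg.1 hV).pow _)
  exact (hind (n + 1) 0 0).1.trans ((hsimple _ _).finrank_le (hcoef n))
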